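/- arXiv:math/0605099 — 2 statements merged into one kernel-verified Lean document; each statement's English description precedes it below -/
import Mathlib

section
/- Let E be a nonempty finite set, P : E × E → ℝ a row-stochastic matrix, S a lumpable equivalence relation on E, and R an equivalence relation on E with S finer than R (S ⊑ R). Then S is finer than 𝒫(R) (i.e., S ⊑ 𝒫(R)). In particular, if moreover T ⊆ E is both an S-equivalence class and an R-equivalence class, then T is a 𝒫(R)-equivalence class. -/
/-!
Since `S` is finer than `R`, every `R`-class is a disjoint union of `S`-classes. Lumpability equates
the transition probabilities of `S`-related states into each `S`-class; summing over the pieces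
equates them into each `R`-class (`classSum_eq_of_lumpable_of_finer`), which gives `S ⊑ 𝒫(R)`.
The statement on classes follows because `S ⊑ 𝒫(R) ⊑ R`: the `𝒫(R)`-class of a point lies between
its `S`-class and its `R`-class, so it equals them when these coincide.
-/

open scoped Classical

/-- A matrix `P` on a finite state space is row-stochastic. -/
def IsRowStochastic {E : Type*} [Fintype E] (P : E → E → ℝ) : Prop :=
  (∀ e e', 0 ≤ P e e') ∧ ∀ e, ∑ e', P e e' = 1

/-- The sum of `P e x` over the `R`-equivalence class of `c`. -/
noncomputable def classSum {E : Type*} [Fintype E] (P : E → E → ℝ) (R : Setoid E)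
    (e c : E) : ℝ :=
  ∑ x ∈ Finset.univ.filter (fun y => R.r y c), P e x

/-- `T` is an equivalence class of the equivalence relation `R`. -/
def IsClass {E : Type*} (R : Setoid E) (T : Set E) : Prop :=
  ∃ e, T = {x | R.r x e}

/-- `R` is lumpable for `P`: related states have equal transition probability into
every `R`-equivalence class. -/
def Lumpable {E : Type*} [Fintype E] (P : E → E → ℝ) (R : Setoid E) : Prop :=
  ∀ e₁ e₂, R.r e₁ e₂ → ∀ c, classSum P R e₁ c = classSum P R e₂ c

/-- The operator `𝒫`: `e₁ 𝒫(R) e₂` iff `e₁ R e₂` and `e₁, e₂` have equal transition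
probability into every `R`-equivalence class. -/
noncomputable def Pop {E : Type*} [Fintype E] (P : E → E → ℝ) (R : Setoid E) : Setoid E where
  r e₁ e₂ := R.r e₁ e₂ ∧ ∀ c, classSum P R e₁ c = classSum P R e₂ c
  iseqv := by
    refine ⟨fun e => ⟨R.iseqv.refl e, fun _ => rfl⟩, ?_, ?_⟩
    · exact fun h => ⟨R.iseqv.symm h.1, fun c => (h.2 c).symm⟩
    · exact fun h₁ h₂ => ⟨R.iseqv.trans h₁.1 h₂.1, fun c => (h₁.2 c).trans (h₂.2 c)⟩

/-- The equivalence relation on `E` whose two classes are `T` and `E \ T`. -/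
def ME {E : Type*} (T : Set E) : Setoid E where
  r e₁ e₂ := e₁ ∈ T ↔ e₂ ∈ T
  iseqv := ⟨fun _ => Iff.rfl, Iff.symm, Iff.trans⟩

/-- Lumpability propagates to coarser relations: an `R`-class is a disjoint union of `S`-classes,
so the transition probability into it is a sum of quantities that agree on `S`-related states. -/
theorem classSum_eq_of_lumpable_of_finer {E : Type*} [Fintype E] {P : E → E → ℝ} {S R : Setoid E}
    (hS : Lumpable P S) (hSR : ∀ e₁ e₂, S.r e₁ e₂ → R.r e₁ e₂) {e₁ e₂ : E} (h : S.r e₁ e₂)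
    (c : E) : classSum P R e₁ c = classSum P R e₂ c := by
  unfold classSum
  rw [← Finset.sum_fiberwise _ (fun x => (Quotient.mk S x)) (P e₁),
    ← Finset.sum_fiberwise _ (fun x => (Quotient.mk S x)) (P e₂)]
  refine Finset.sum_congr rfl fun q _ => ?_
  induction q using Quotient.inductionOn with | h d => ?_
  have hmk : ∀ x, Quotient.mk S x = Quotient.mk S d ↔ S.r x d := fun x => Quotient.eq
  simp only [hmk]
  -- The `S`-class of `d` is contained in the `R`-class of `c` or disjoint from it.
  by_cases hd : R.r d c
  · have hfib : (Finset.univ.filter fun y => R.r y c).filter (fun x => S.r x d) =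
        Finset.univ.filter fun x => S.r x d := by
      ext x
      simpa using fun hx => R.iseqv.trans (hSR _ _ hx) hd
    rw [hfib]
    exact hS _ _ h d
  · have hfib : (Finset.univ.filter fun y => R.r y c).filter (fun x => S.r x d) = ∅ := by
      ext x
      simpa using fun hx hxd => hd (R.iseqv.trans (R.iseqv.symm (hSR _ _ hxd)) hx)
    rw [hfib, Finset.sum_empty, Finset.sum_empty]

/-- If `S` is lumpable for `P` and `S` is finer than `R`, then `S` is finer than `𝒫(R)`;
in particular any set `T` which is both an `S`-class and an `R`-class is a `𝒫(R)`-class. -/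
theorem finer_Pop_of_lumpable {E : Type*} [Fintype E] [Nonempty E]
    (P : E → E → ℝ) (hP : IsRowStochastic P) (S R : Setoid E)
    (hS : Lumpable P S) (hSR : ∀ e₁ e₂, S.r e₁ e₂ → R.r e₁ e₂) :
    (∀ e₁ e₂, S.r e₁ e₂ → (Pop P R).r e₁ e₂) ∧
    (∀ T : Set E, IsClass S T → IsClass R T → IsClass (Pop P R) T) := by
  have hPop : ∀ e₁ e₂, S.r e₁ e₂ → (Pop P R).r e₁ e₂ := fun e₁ e₂ h =>
    ⟨hSR _ _ h, classSum_eq_of_lumpable_of_finer hS hSR h⟩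
  refine ⟨hPop, ?_⟩
  rintro T ⟨a, ha⟩ ⟨b, hb⟩
  have haT : a ∈ T := by
    rw [ha]
    exact S.iseqv.refl a
  refine ⟨a, Set.ext fun x => ⟨fun hx => ?_, fun hx => ?_⟩⟩
  · rw [ha] at hx
    exact hPop _ _ hx
  · rw [hb] at haT ⊢
    exact R.iseqv.trans hx.1 haT
end

section
/- Let E be a finite set, P : E × E → ℝ a row-stochastic matrix, and T ⊆ E with ∅ ≠ T ⊊ E. Let M_E be the equivalence relation on E with the two classes T and E ∖ T, and suppose S is an equivalence relation on E that is lumpable for P, has T as an equivalence class, and is maximal with these properties (every lumpable equivalence relation having T as a class is finer than S). Then for every n ≥ 0: if the n-fold iterate 𝒫ⁿ(M_E) is not equal to S, then 𝒫ⁿ(M_E) has at least n + 2 equivalence classes. -/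
/-!
Every relation in the sequence `𝒫ⁿ(M_E)` lies above `S`: a lumpable relation below `R` is also
below `𝒫(R)`, because each `R`-class is a disjoint union of classes of the lumpable relation
(`le_Pop`). Being squeezed between `S` and `M_E`, each iterate has `T` as a class, so by maximality
an iterate that is lumpable must equal `S` (`iterate_eq_of_lumpable`). Since `𝒫(R) = R` exactly when
`R` is lumpable, the sequence gets strictly finer, hence gains at least one class, at every step
until it reaches `S`. It starts from the two classes of `M_E`.
-/

open scoped Classical

theorem Pop_le {E : Type*} [Fintype E] (P : E → E → ℝ) (R : Setoid E) : Pop P R ≤ R :=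
  fun _ _ h => h.1

theorem Pop_eq_self_iff {E : Type*} [Fintype E] (P : E → E → ℝ) (R : Setoid E) :
    Pop P R = R ↔ Lumpable P R := by
  constructor
  · intro h e₁ e₂ h12
    rw [← h] at h12
    exact h12.2
  · intro h
    exact le_antisymm (Pop_le P R) fun _ _ h12 => ⟨h12, h _ _ h12⟩

/-- Sums over an `R`-class split as sums over the classes of any finer relation `S`; if `S` is
lumpable, these do not distinguish `S`-related states. -/
theorem classSum_eq_of_le {E : Type*} [Fintype E] {P : E → E → ℝ} {R S : Setoid E}
    (hS : Lumpable P S) (hSR : S ≤ R) {e₁ e₂ : E} (h : S.r e₁ e₂) (c : E) :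
    classSum P R e₁ c = classSum P R e₂ c := by
  unfold classSum
  rw [← Finset.sum_fiberwise _ (fun x => Quotient.mk S x) (P e₁),
    ← Finset.sum_fiberwise _ (fun x => Quotient.mk S x) (P e₂)]
  refine Finset.sum_congr rfl fun q _ => ?_
  induction q using Quotient.inductionOn with
  | h d =>
    by_cases hd : R.r d c
    · -- The `S`-class of `d` is contained in the `R`-class of `c`.
      have key : (Finset.univ.filter (fun y => R.r y c)).filter
          (fun x => Quotient.mk S x = Quotient.mk S d)
          = Finset.univ.filter (fun y => S.r y d) := by
        ext x
        simp only [Finset.mem_filter, Finset.mem_univ, true_and]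
        constructor
        · exact fun hx => Quotient.exact hx.2
        · exact fun hx => ⟨R.iseqv.trans (hSR hx) hd, Quotient.sound hx⟩
      rw [key]
      exact hS e₁ e₂ h d
    · -- The `S`-class of `d` is disjoint from the `R`-class of `c`.
      have key : (Finset.univ.filter (fun y => R.r y c)).filter
          (fun x => Quotient.mk S x = Quotient.mk S d) = ∅ := by
        ext x
        simp only [Finset.mem_filter, Finset.mem_univ, true_and, Finset.notMem_empty, iff_false]
        rintro ⟨h1, h2⟩
        exact hd (R.iseqv.trans (R.iseqv.symm (hSR (Quotient.exact h2))) h1)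
      rw [key, Finset.sum_empty, Finset.sum_empty]

theorem le_Pop {E : Type*} [Fintype E] {P : E → E → ℝ} {R S : Setoid E}
    (hS : Lumpable P S) (hSR : S ≤ R) : S ≤ Pop P R :=
  fun _ _ h => ⟨hSR h, classSum_eq_of_le hS hSR h⟩

theorem le_ME_of_isClass {E : Type*} {S : Setoid E} {T : Set E} (hST : IsClass S T) :
    S ≤ ME T := by
  obtain ⟨e, rfl⟩ := hST
  intro x y hxy
  exact ⟨fun hx => S.iseqv.trans (S.iseqv.symm hxy) hx, fun hy => S.iseqv.trans hxy hy⟩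

theorem isClass_of_le_of_le_ME {E : Type*} {R S : Setoid E} {T : Set E} (hST : IsClass S T)
    (hSR : S ≤ R) (hR : R ≤ ME T) : IsClass R T := by
  obtain ⟨e, hT⟩ := hST
  have he : e ∈ T := hT ▸ S.iseqv.refl e
  refine ⟨e, Set.ext fun x => ⟨fun hx => ?_, fun hx => (hR hx).2 he⟩⟩
  rw [hT] at hx
  exact hSR hx

theorem le_iterate_Pop_ME {E : Type*} [Fintype E] {P : E → E → ℝ} {S : Setoid E} {T : Set E}
    (hSl : Lumpable P S) (hST : IsClass S T) (n : ℕ) : S ≤ (Pop P)^[n] (ME T) := by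
  induction n with
  | zero => exact le_ME_of_isClass hST
  | succ n ih =>
    rw [Function.iterate_succ_apply']
    exact le_Pop hSl ih

theorem iterate_Pop_le {E : Type*} [Fintype E] (P : E → E → ℝ) (R : Setoid E) (n : ℕ) :
    (Pop P)^[n] R ≤ R := by
  induction n with
  | zero => exact le_rfl
  | succ n ih =>
    rw [Function.iterate_succ_apply']
    exact (Pop_le P _).trans ih

theorem iterate_eq_of_lumpable {E : Type*} [Fintype E] {P : E → E → ℝ} {S : Setoid E} {T : Set E}
    (hSl : Lumpable P S) (hST : IsClass S T)
    (hmax : ∀ R' : Setoid E, Lumpable P R' → IsClass R' T →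
      ∀ e₁ e₂, R'.r e₁ e₂ → S.r e₁ e₂)
    {n : ℕ} (hn : Lumpable P ((Pop P)^[n] (ME T))) : (Pop P)^[n] (ME T) = S := by
  have hS := le_iterate_Pop_ME hSl hST n
  exact le_antisymm
    (fun x y h => hmax _ hn (isClass_of_le_of_le_ME hST hS (iterate_Pop_le P _ n)) x y h) hS

theorem card_quotient_lt_of_lt {E : Type*} [Finite E] {R R' : Setoid E} (h : R' < R) :
    Nat.card (Quotient R) < Nat.card (Quotient R') := by
  let f : Quotient R' → Quotient R := Quotient.map id fun _ _ hxy => h.le hxy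
  have hf : Function.Surjective f := by
    intro q
    induction q using Quotient.inductionOn with
    | h x => exact ⟨Quotient.mk R' x, rfl⟩
  refine lt_of_le_of_ne (Nat.card_le_card_of_surjective f hf) fun heq => h.not_ge ?_
  -- A surjection between finite sets of equal size is injective, so `R` is contained in `R'`.
  have hinj : Function.Injective f :=
    ((Nat.bijective_iff_surjective_and_card f).2 ⟨hf, heq.symm⟩).1
  intro x y hxy
  exact Quotient.exact (hinj (a₁ := Quotient.mk R' x) (a₂ := Quotient.mk R' y)
    (Quotient.sound hxy))

theorem two_le_card_quotient_ME {E : Type*} [Finite E] {T : Set E} (hT : T.Nonempty)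
    (hTne : T ≠ Set.univ) : 2 ≤ Nat.card (Quotient (ME T)) := by
  obtain ⟨a, ha⟩ := hT
  obtain ⟨b, hb⟩ := (Set.ne_univ_iff_exists_notMem T).1 hTne
  have : Nontrivial (Quotient (ME T)) :=
    ⟨Quotient.mk _ a, Quotient.mk _ b, fun h => hb ((Quotient.exact h : a ∈ T ↔ b ∈ T).1 ha)⟩
  exact Finite.one_lt_card

/-- If the `n`-th iterate of `𝒫` applied to `M_E` has not yet reached the optimal
relation `S`, then it has at least `n + 2` equivalence classes. -/
theorem card_quotient_iterate_Pop_ME {E : Type*} [Fintype E]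
    (P : E → E → ℝ) (hP : IsRowStochastic P)
    (T : Set E) (hT : T.Nonempty) (hTne : T ≠ Set.univ)
    (S : Setoid E) (hSl : Lumpable P S) (hST : IsClass S T)
    (hmax : ∀ R' : Setoid E, Lumpable P R' → IsClass R' T →
      ∀ e₁ e₂, R'.r e₁ e₂ → S.r e₁ e₂)
    (n : ℕ) (hne : (Pop P)^[n] (ME T) ≠ S) :
    n + 2 ≤ Nat.card (Quotient ((Pop P)^[n] (ME T))) := by
  induction n with
  | zero => exact two_le_card_quotient_ME hT hTne
  | succ n ih =>
    rw [Function.iterate_succ_apply'] at hne ⊢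
    -- Once `S` is reached the sequence stays there.
    have hn : (Pop P)^[n] (ME T) ≠ S := fun h =>
      hne (by rw [h]; exact (Pop_eq_self_iff P S).2 hSl)
    have hlt : Pop P ((Pop P)^[n] (ME T)) < (Pop P)^[n] (ME T) :=
      lt_of_le_of_ne (Pop_le P _) fun h =>
        hn (iterate_eq_of_lumpable hSl hST hmax ((Pop_eq_self_iff P _).1 h))
    have := card_quotient_lt_of_lt hlt
    have := ih hn
    omega
end
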